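/- Let F be a group with normal subgroups R1, R2, R3. Let a1 ∈ R1, b1 ∈ R2 with a1·b1 ∈ R3, and let a2 ∈ R1 ⊓ R2. Then [a1·a2, b1^{a2}·a2⁻¹] ≡ [a1, b1] modulo [R3, R1 ⊓ R2]; that is, [a1 a2, a2⁻¹ b1 a2 a2⁻¹]·[a1, b1]⁻¹ ∈ [R3, R1 ⊓ R2]. -/

import Mathlib

open scoped commutatorElement in
theorem commutatorElement_mul_mul_inv {G : Type*} [Group G] (x y z : G) :
    ⁅z * x, y * z⁻¹⁆ = ⁅z, x * y⁆ * ⁅x, y⁆ := by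
  simp only [commutatorElement_def]
  group

open scoped commutatorElement in
theorem stmt_5_general {G : Type*} [Group G] {H K : Subgroup G} {a b c : G}
    (hba : b * a ∈ H) (hc : c ∈ K) :
    ((a * c)⁻¹ * (c⁻¹ * b * c * c⁻¹)⁻¹ * (a * c) * (c⁻¹ * b * c * c⁻¹)) *
      (a⁻¹ * b⁻¹ * a * b)⁻¹ ∈ ⁅H, K⁆ := by
  have hab_inv : a⁻¹ * b⁻¹ ∈ H := by
    simpa only [mul_inv_rev] using inv_mem hba
  -- Mathlib's `⁅x, y⁆` is `x * y * x⁻¹ * y⁻¹`, so `x⁻¹ * y⁻¹ * x * y` becomes `⁅x⁻¹, y⁻¹⁆`.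
  have hcomm : ⁅c⁻¹ * a⁻¹, b⁻¹ * c⁻¹⁻¹⁆ * ⁅a⁻¹, b⁻¹⁆⁻¹ ∈ ⁅H, K⁆ := by
    rw [commutatorElement_mul_mul_inv, mul_inv_cancel_right, Subgroup.commutator_comm]
    exact Subgroup.commutator_mem_commutator (inv_mem hc) hab_inv
  simpa only [commutatorElement_def, mul_inv_cancel_right, mul_inv_rev, inv_inv] using hcomm

theorem stmt_5 {F : Type*} [Group F] (R1 R2 R3 : Subgroup F)
    [R1.Normal] [R2.Normal] [R3.Normal]
    (a1 b1 a2 : F) (ha1 : a1 ∈ R1) (hb1 : b1 ∈ R2)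
    (hab : a1 * b1 ∈ R3) (ha2 : a2 ∈ R1 ⊓ R2) :
    ((a1 * a2)⁻¹ * (a2⁻¹ * b1 * a2 * a2⁻¹)⁻¹ * (a1 * a2) * (a2⁻¹ * b1 * a2 * a2⁻¹)) *
      (a1⁻¹ * b1⁻¹ * a1 * b1)⁻¹ ∈ (⁅R3, R1 ⊓ R2⁆ : Subgroup F) :=
  stmt_5_general (Subgroup.Normal.mem_comm inferInstance hab) ha2
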